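/- arXiv:math/0407369 — 7 statements merged into one kernel-verified Lean document; each statement's English description precedes it below -/
import Mathlib

section
/- Let λ > 1, let A be a nonempty complete metric space, and let S : A → A be a λ-expansion, i.e. S is bijective and dist(S x, S y) = λ · dist(x, y) for all x, y ∈ A. Then for every δ > 0 and every two-sided δ-pseudo-orbit of S, i.e. a sequence (x_n)_{n∈ℤ} in A with dist(S x_n, x_{n+1}) ≤ δ for all n ∈ ℤ, there exists a unique point x ∈ A such that dist(Sⁿ x, x_n) ≤ δ/(λ−1) for all n ∈ ℤ (where Sⁿ denotes the n-th iterate of S for n ≥ 0 and of S⁻¹ for n < 0). -/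
/-!
For each `n`, pull the future of the pseudo-orbit back to time `n`: the points `S⁻ᵏ (x (n + k))`,
`k = 0, 1, 2, …`, have consecutive distances at most `δ / λ ^ (k + 1)`, so they converge to some
`q n` with `dist (x n) (q n) ≤ ∑ δ / λ ^ (k + 1) = δ / (λ - 1)`. The sequence `q` is a genuine orbit
of `S`, since `S` maps the pulled-back sequence at time `n` to the one at time `n + 1` up to an index
shift. Uniqueness holds because two shadowing points have forward orbits at bounded distance,
while that distance is multiplied by `λ > 1` at each step.
-/

theorem perm_apply_inv_self {A : Type*} (f : Equiv.Perm A) (a : A) : f (f⁻¹ a) = a := by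
  rw [← Equiv.Perm.mul_apply, mul_inv_cancel, Equiv.Perm.one_apply]

theorem dist_pow_expansion {A : Type*} [MetricSpace A] (lam : ℝ) (S : Equiv.Perm A)
    (hS : ∀ x y : A, dist (S x) (S y) = lam * dist x y) (k : ℕ) (a b : A) :
    dist ((S ^ k) a) ((S ^ k) b) = lam ^ k * dist a b := by
  induction k with
  | zero => simp
  | succ k ih => rw [pow_succ', Equiv.Perm.mul_apply, Equiv.Perm.mul_apply, hS, ih]; ring

/-- The limit of the pulled-back future of the pseudo-orbit from time `n`. -/
theorem exists_pullback_limit {A : Type*} [MetricSpace A] [CompleteSpace A]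
    (lam : ℝ) (hlam : 1 < lam) (S : Equiv.Perm A)
    (hS : ∀ x y : A, dist (S x) (S y) = lam * dist x y)
    (δ : ℝ) (x : ℤ → A) (hx : ∀ n : ℤ, dist (S (x n)) (x (n + 1)) ≤ δ) (n : ℤ) :
    ∃ q : A, Filter.Tendsto (fun k : ℕ => (S ^ k)⁻¹ (x (n + k))) Filter.atTop (nhds q) ∧
      dist q (x n) ≤ δ / (lam - 1) := by
  have hpos : 0 < lam := by linarith
  have hr : lam⁻¹ < 1 := inv_lt_one_of_one_lt₀ hlam
  have hu : ∀ k : ℕ, dist ((S ^ k)⁻¹ (x (n + k))) ((S ^ (k + 1))⁻¹ (x (n + (k + 1 : ℕ))))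
      ≤ δ / lam * lam⁻¹ ^ k := by
    intro k
    have h := dist_pow_expansion lam S hS (k + 1) ((S ^ k)⁻¹ (x (n + k)))
      ((S ^ (k + 1))⁻¹ (x (n + (k + 1 : ℕ))))
    have e : (S ^ (k + 1)) ((S ^ k)⁻¹ (x (n + k))) = S (x (n + k)) := by
      rw [pow_succ', Equiv.Perm.mul_apply, perm_apply_inv_self]
    rw [e, perm_apply_inv_self] at h
    have h2 := hx (n + k)
    rw [add_assoc, ← Nat.cast_succ, Nat.succ_eq_add_one, h] at h2
    have e2 : δ / lam * lam⁻¹ ^ k = δ / lam ^ (k + 1) := by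
      rw [inv_pow, pow_succ]; field_simp
    rw [e2, le_div_iff₀ (by positivity)]
    linarith
  obtain ⟨q, hq⟩ := cauchySeq_tendsto_of_complete (cauchySeq_of_le_geometric _ _ hr hu)
  refine ⟨q, hq, ?_⟩
  have h := dist_le_of_le_geometric_of_tendsto₀ _ _ hr hu hq
  have e : δ / lam / (1 - lam⁻¹) = δ / (lam - 1) := by
    have : lam - 1 ≠ 0 := by linarith
    have h3 : 1 - lam⁻¹ = (lam - 1) / lam := by field_simp
    rw [h3]; field_simp
  rw [e, dist_comm] at h
  simpa using h

/-- unique shadowing of two-sided δ-pseudo-orbits for a λ-expansion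
on a nonempty complete metric space, with shadowing bound δ/(λ-1). -/
theorem expansion_unique_shadowing
    {A : Type*} [MetricSpace A] [CompleteSpace A] [Nonempty A]
    (lam : ℝ) (hlam : 1 < lam) (S : Equiv.Perm A)
    (hS : ∀ x y : A, dist (S x) (S y) = lam * dist x y)
    (δ : ℝ) (hδ : 0 < δ) (x : ℤ → A)
    (hx : ∀ n : ℤ, dist (S (x n)) (x (n + 1)) ≤ δ) :
    ∃! p : A, ∀ n : ℤ, dist ((S ^ n) p) (x n) ≤ δ / (lam - 1) := by
  have hcont : Continuous S :=
    (LipschitzWith.of_dist_le_mul (K := ⟨lam, by linarith⟩)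
      (fun a b => (hS a b).le)).continuous
  choose q hq hqx using exists_pullback_limit lam hlam S hS δ x hx
  have hstep : ∀ n, S (q n) = q (n + 1) := by
    intro n
    refine tendsto_nhds_unique ?_ (hq (n + 1))
    have h := ((hcont.tendsto (q n)).comp (hq n)).comp (Filter.tendsto_add_atTop_nat 1)
    refine h.congr fun k => ?_
    have e : n + ((k + 1 : ℕ) : ℤ) = n + 1 + k := by push_cast; ring
    simp only [Function.comp_apply]
    rw [e, pow_succ, mul_inv_rev, Equiv.Perm.mul_apply, perm_apply_inv_self]
  have horb : ∀ n : ℤ, (S ^ n) (q 0) = q n := by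
    intro n
    induction n with
    | zero => simp
    | succ k ih => rw [add_comm, zpow_one_add, Equiv.Perm.mul_apply, ih, hstep, add_comm]
    | pred k ih =>
      apply S.injective
      rw [hstep, ← Equiv.Perm.mul_apply, ← zpow_one_add]
      simpa using ih
  refine ⟨q 0, fun n => by rw [horb]; exact hqx n, fun p hp => ?_⟩
  by_contra hne
  have hd : 0 < dist p (q 0) := dist_pos.mpr hne
  obtain ⟨k, hk⟩ := pow_unbounded_of_one_lt (2 * (δ / (lam - 1)) / dist p (q 0)) hlam
  rw [div_lt_iff₀ hd, ← dist_pow_expansion lam S hS] at hk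
  have h1 := hp k
  have h2 := hqx k
  rw [← horb] at h2
  rw [zpow_natCast] at h1 h2
  linarith [dist_triangle_right ((S ^ k) p) ((S ^ k) (q 0)) (x k)]
end

section
/- Let λ > 1, let A and B be complete metric spaces, let S : A → A be a λ-expansion (S bijective with dist(S x, S y) = λ · dist(x, y)) and T : B → B a λ⁻¹-contraction (T bijective with dist(T x, T y) = λ⁻¹ · dist(x, y)), and let Φ : A × B → A × B be the split hyperbolic homeomorphism Φ(a, b) = (S a, T b), where A × B carries the sup metric dist((a,b),(a',b')) = max(dist(a,a'), dist(b,b')). Then for every δ > 0 and every δ-pseudo-orbit (z_n)_{n∈ℤ} of Φ (i.e. dist(Φ(z_n), z_{n+1}) ≤ δ for all n ∈ ℤ) there exists a point z ∈ A × B with dist(Φⁿ z, z_n) ≤ λδ/(λ−1) for all n ∈ ℤ; moreover z is the unique point satisfying sup_{n∈ℤ} dist(Φⁿ z, z_n) < ∞. -/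
/-! The two factors are treated separately, and the contraction `T` reduces to the expansion `T⁻¹`
by reversing time, which turns a `δ`-pseudo-orbit of `T` into a `lam * δ`-pseudo-orbit of `T⁻¹`.

For an expansion `S` and a `δ`-pseudo-orbit `x`, the points `S ^ (-k) (x (m + k))`, `k = 0, 1, …`,
have consecutive distances at most `δ * lam⁻¹ ^ (k + 1)`, so they converge to some `y m` with
`dist (x m) (y m) ≤ δ / (lam - 1)`, and `S (y m) = y (m + 1)`; the orbit of `y 0` shadows `x`
(`exists_shadow_of_expansion`). Uniqueness holds because distinct points have forward
`S`-orbits that diverge (`eq_of_expansion_bounded`).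
-/

lemma dist_zpow_of_expansion {A : Type*} [MetricSpace A] {lam : ℝ} (hlam : 1 < lam)
    {S : Equiv.Perm A} (hS : ∀ x y : A, dist (S x) (S y) = lam * dist x y) (n : ℤ) :
    ∀ x y : A, dist ((S ^ n) x) ((S ^ n) y) = lam ^ n * dist x y := by
  have h0 : lam ≠ 0 := by positivity
  induction n with
  | zero => simp
  | succ n ih =>
    intro x y
    rw [zpow_add_one, zpow_add_one₀ h0, Equiv.Perm.mul_apply, Equiv.Perm.mul_apply, ih, hS]
    ring
  | pred n ih =>
    intro x y
    have h : dist x y = lam * dist (S⁻¹ x) (S⁻¹ y) := by simpa using hS (S⁻¹ x) (S⁻¹ y)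
    rw [zpow_sub_one, zpow_sub_one₀ h0, Equiv.Perm.mul_apply, Equiv.Perm.mul_apply, ih, h]
    field_simp

/-- The shadowing constant `δ / (lam - 1)` is `δ * lam⁻¹ / (1 - lam⁻¹)`, the sum of the geometric
series bounding the distances between consecutive pulled-back points. -/
lemma exists_shadow_of_expansion {A : Type*} [MetricSpace A] [CompleteSpace A] {lam : ℝ}
    (hlam : 1 < lam) {S : Equiv.Perm A} (hS : ∀ x y : A, dist (S x) (S y) = lam * dist x y)
    {δ : ℝ} {x : ℤ → A} (hx : ∀ n, dist (S (x n)) (x (n + 1)) ≤ δ) :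
    ∃ a : A, ∀ n : ℤ, dist ((S ^ n) a) (x n) ≤ δ / (lam - 1) := by
  have h0 : 0 < lam := by positivity
  have hr : lam⁻¹ < 1 := inv_lt_one_of_one_lt₀ hlam
  let u : ℤ → ℕ → A := fun m k => (S ^ (-(k : ℤ))) (x (m + k))
  have hu : ∀ m k, dist (u m k) (u m (k + 1)) ≤ δ * lam⁻¹ * lam⁻¹ ^ k := by
    intro m k
    have e : u m k = (S ^ (-((k + 1 : ℕ) : ℤ))) (S (x (m + k))) := by
      rw [← Equiv.Perm.mul_apply, ← zpow_add_one]
      simp [u]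
    have e' : u m (k + 1) = (S ^ (-((k + 1 : ℕ) : ℤ))) (x (m + k + 1)) := by
      simp only [u, Nat.cast_add, Nat.cast_one, add_assoc]
    rw [e, e', dist_zpow_of_expansion hlam hS, zpow_neg, zpow_natCast, ← inv_pow, pow_succ]
    have := mul_le_mul_of_nonneg_left (hx (m + k)) (by positivity : 0 ≤ lam⁻¹ ^ k * lam⁻¹)
    linarith
  choose y hy using fun m =>
    cauchySeq_tendsto_of_complete (cauchySeq_of_le_geometric _ _ hr (hu m))
  have hcont : Continuous S :=
    (LipschitzWith.of_dist_le_mul (K := ⟨lam, h0.le⟩) fun a b => (hS a b).le).continuous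
  have hstep : ∀ m, S (y m) = y (m + 1) := by
    intro m
    have h1 := (hcont.tendsto (y m)).comp ((Filter.tendsto_add_atTop_iff_nat 1).2 (hy m))
    refine tendsto_nhds_unique h1 ((hy (m + 1)).congr fun k => ?_)
    simp only [Function.comp, u]
    rw [← Equiv.Perm.mul_apply, ← zpow_one_add]
    push_cast
    congr 2 <;> ring_nf
  have horb : ∀ n : ℤ, (S ^ n) (y 0) = y n := by
    intro n
    induction n with
    | zero => simp
    | succ n ih => rw [add_comm, zpow_one_add, Equiv.Perm.mul_apply, ih, hstep, add_comm]
    | pred n ih =>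
      apply S.injective
      rw [hstep, ← Equiv.Perm.mul_apply, ← zpow_one_add]
      simpa using ih
  refine ⟨y 0, fun n => ?_⟩
  have h := dist_le_of_le_geometric_of_tendsto₀ _ _ hr (hu n) (hy n)
  have e : u n 0 = x n := by
    simp only [u, Nat.cast_zero, neg_zero, zpow_zero, add_zero, Equiv.Perm.one_apply]
  have hval : δ * lam⁻¹ / (1 - lam⁻¹) = δ / (lam - 1) := by
    have : 1 - lam⁻¹ = (lam - 1) * lam⁻¹ := by field_simp
    rw [this, mul_div_mul_right _ _ (by positivity)]
  rwa [horb, dist_comm, ← hval, ← e]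

lemma eq_of_expansion_bounded {A : Type*} [MetricSpace A] {lam : ℝ} (hlam : 1 < lam)
    {S : Equiv.Perm A} (hS : ∀ x y : A, dist (S x) (S y) = lam * dist x y) {a b : A} {C : ℝ}
    (h : ∀ n : ℤ, dist ((S ^ n) a) ((S ^ n) b) ≤ C) : a = b := by
  by_contra hab
  have hd : 0 < dist a b := dist_pos.2 hab
  obtain ⟨n, hn⟩ := pow_unbounded_of_one_lt (C / dist a b) hlam
  have := h n
  rw [dist_zpow_of_expansion hlam hS, zpow_natCast] at this
  rw [div_lt_iff₀ hd] at hn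
  linarith

/-- the split hyperbolic homeomorphism Φ(a,b) = (S a, T b) on the product
of a complete λ-expansion and a complete λ⁻¹-contraction (sup metric) shadows every
two-sided δ-pseudo-orbit with bound λδ/(λ-1), and the shadowing point is the unique
point whose orbit stays at finite distance from the pseudo-orbit. -/
theorem split_hyperbolic_shadowing
    {A B : Type*} [MetricSpace A] [CompleteSpace A] [MetricSpace B] [CompleteSpace B]
    (lam : ℝ) (hlam : 1 < lam) (S : Equiv.Perm A) (T : Equiv.Perm B)
    (hS : ∀ x y : A, dist (S x) (S y) = lam * dist x y)
    (hT : ∀ x y : B, dist (T x) (T y) = lam⁻¹ * dist x y)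
    (Φ : Equiv.Perm (A × B)) (hΦ : ∀ p : A × B, Φ p = (S p.1, T p.2))
    (δ : ℝ) (hδ : 0 < δ) (z : ℤ → A × B)
    (hz : ∀ n : ℤ, dist (Φ (z n)) (z (n + 1)) ≤ δ) :
    ∃ p : A × B, (∀ n : ℤ, dist ((Φ ^ n) p) (z n) ≤ lam * δ / (lam - 1)) ∧
      ∀ q : A × B, (∃ C : ℝ, ∀ n : ℤ, dist ((Φ ^ n) q) (z n) ≤ C) → q = p := by
  have h0 : 0 < lam := by positivity
  have hpow : ∀ (n : ℤ) (p : A × B), (Φ ^ n) p = ((S ^ n) p.1, (T ^ n) p.2) := by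
    intro n
    induction n with
    | zero => simp
    | succ n ih => intro p; simp only [zpow_add_one, Equiv.Perm.mul_apply, ih, hΦ]
    | pred n ih =>
      intro p
      have hinv : Φ⁻¹ p = (S⁻¹ p.1, T⁻¹ p.2) := by
        rw [Equiv.Perm.inv_eq_iff_eq, hΦ]
        simp
      simp only [zpow_sub_one, Equiv.Perm.mul_apply, ih, hinv]
  have hT' : ∀ x y : B, dist (T⁻¹ x) (T⁻¹ y) = lam * dist x y := by
    intro x y
    have h : dist x y = lam⁻¹ * dist (T⁻¹ x) (T⁻¹ y) := by simpa using hT (T⁻¹ x) (T⁻¹ y)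
    rw [h]
    field_simp
  have hz1 : ∀ n, dist (S (z n).1) (z (n + 1)).1 ≤ δ := fun n => by
    have h := hz n
    rw [hΦ, Prod.dist_eq] at h
    exact (le_max_left _ _).trans h
  have hz2 : ∀ n, dist (T (z n).2) (z (n + 1)).2 ≤ δ := fun n => by
    have h := hz n
    rw [hΦ, Prod.dist_eq] at h
    exact (le_max_right _ _).trans h
  obtain ⟨a, ha⟩ := exists_shadow_of_expansion hlam hS (x := fun n => (z n).1) hz1
  obtain ⟨b, hb⟩ := exists_shadow_of_expansion hlam hT' (x := fun n => (z (-n)).2)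
    (δ := lam * δ) (fun n => by
      have h := hT' (z (-n)).2 (T (z (-(n + 1))).2)
      rw [show T⁻¹ (T (z (-(n + 1))).2) = (z (-(n + 1))).2 from T.symm_apply_apply _] at h
      rw [h, dist_comm]
      have h2 := hz2 (-(n + 1))
      rw [show -(n + 1) + 1 = -n by ring] at h2
      exact mul_le_mul_of_nonneg_left h2 h0.le)
  have hp : ∀ n : ℤ, dist ((Φ ^ n) (a, b)) (z n) ≤ lam * δ / (lam - 1) := by
    intro n
    rw [hpow, Prod.dist_eq]
    refine max_le ((ha n).trans ?_) ?_
    · have h1 : 0 < lam - 1 := by linarith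
      gcongr
      nlinarith
    · simpa using hb (-n)
  refine ⟨(a, b), hp, ?_⟩
  rintro q ⟨C, hC⟩
  have hd : ∀ n : ℤ, dist ((Φ ^ n) q) ((Φ ^ n) (a, b)) ≤ C + lam * δ / (lam - 1) := fun n =>
    (dist_triangle_right _ _ (z n)).trans (add_le_add (hC n) (hp n))
  simp only [hpow, Prod.dist_eq] at hd
  refine Prod.ext ?_ ?_
  · exact eq_of_expansion_bounded hlam hS fun n => (le_max_left _ _).trans (hd n)
  · refine eq_of_expansion_bounded hlam hT' (C := C + lam * δ / (lam - 1)) fun n => ?_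
    simpa using (le_max_right _ _).trans (hd (-n))
end

section
/- Let λ > 1, let A and B be complete metric spaces, let S : A → A be a λ-expansion and T : B → B a λ⁻¹-contraction, and let Φ(a, b) = (S a, T b) on A × B with the sup metric. Let G : A × B → A × B be a homeomorphism with δ := sup_z dist(G z, Φ z) < ∞. Then there exists a continuous map H : A × B → A × B such that H ∘ G = Φ ∘ H and dist(H z, z) ≤ λδ/(λ−1) for all z ∈ A × B. -/
/-!
Since `Φ` is a product, the two components of `H` can be built separately, and each is a uniform
limit of a geometrically convergent sequence of continuous maps: the first component is
`lim S⁻ⁿ ((Gⁿ z).1)` and the second is `lim Tⁿ ((G⁻ⁿ z).2)`. Both `S⁻¹` and `T` contract by `λ⁻¹`,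
so both limits are instances of `exists_continuous_contraction_limit`. Consecutive terms differ by
at most `(δ / λ) λ⁻ⁿ` and `δ λ⁻ⁿ` respectively, and summing gives the bounds `δ / (λ - 1)` and
`λ δ / (λ - 1)`.
-/

open Filter Topology

/-- If `R` contracts by `k < 1` and `p` is within `ε` of `R ∘ p ∘ g`, then the maps
`Rⁿ ∘ p ∘ gⁿ` converge uniformly to a continuous solution `h` of `R ∘ h ∘ g = h`, and `h` is within
`ε / (1 - k)` of `p`. -/
lemma exists_continuous_contraction_limit {X C : Type*} [TopologicalSpace X] [MetricSpace C]
    [CompleteSpace C] {k ε : ℝ} (hk0 : 0 ≤ k) (hk1 : k < 1) (R : C → C)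
    (hR : ∀ x y, dist (R x) (R y) = k * dist x y) (g : X → X) (hg : Continuous g)
    (p : X → C) (hp : Continuous p) (hε : ∀ x, dist (p x) (R (p (g x))) ≤ ε) :
    ∃ h : X → C, Continuous h ∧ (∀ x, R (h (g x)) = h x) ∧
      ∀ x, dist (h x) (p x) ≤ ε / (1 - k) := by
  have hRc : Continuous R :=
    (LipschitzWith.of_dist_le_mul (K := ⟨k, hk0⟩) fun x y => (hR x y).le).continuous
  have hRn : ∀ (n : ℕ) (x y : C), dist (R^[n] x) (R^[n] y) = k ^ n * dist x y := by
    intro n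
    induction n with
    | zero => simp
    | succ n ih =>
      intro x y
      rw [Function.iterate_succ_apply, Function.iterate_succ_apply, ih, hR]
      ring
  let u : ℕ → X → C := fun n x => R^[n] (p (g^[n] x))
  have hstep : ∀ x n, dist (u n x) (u (n + 1) x) ≤ ε * k ^ n := by
    intro x n
    simp only [u]
    rw [Function.iterate_succ_apply, Function.iterate_succ_apply', hRn, mul_comm]
    exact mul_le_mul_of_nonneg_right (hε _) (pow_nonneg hk0 n)
  choose h hh using fun x =>
    cauchySeq_tendsto_of_complete (cauchySeq_of_le_geometric k ε hk1 (hstep x))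
  have hd : ∀ x n, dist (u n x) (h x) ≤ ε * k ^ n / (1 - k) := fun x n =>
    dist_le_of_le_geometric_of_tendsto k ε hk1 (hstep x) (hh x) n
  have hunif : TendstoUniformly u h atTop := by
    rw [Metric.tendstoUniformly_iff]
    intro η hη
    have h0 : Tendsto (fun n : ℕ => ε * k ^ n / (1 - k)) atTop (𝓝 0) := by
      simpa using ((tendsto_pow_atTop_nhds_zero_of_lt_one hk0 hk1).const_mul ε).div_const (1 - k)
    filter_upwards [h0.eventually_lt_const hη] with n hn x
    rw [dist_comm]
    exact (hd x n).trans_lt hn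
  refine ⟨h, hunif.continuous (Frequently.of_forall fun n =>
    (hRc.iterate n).comp (hp.comp (hg.iterate n))), fun x => ?_, fun x => ?_⟩
  · have h1 : Tendsto (fun n => R (u n (g x))) atTop (𝓝 (R (h (g x)))) :=
      (hRc.tendsto _).comp (hh (g x))
    have h2 : Tendsto (fun n => u (n + 1) x) atTop (𝓝 (h x)) :=
      (hh x).comp (tendsto_add_atTop_nat 1)
    refine tendsto_nhds_unique h1 (h2.congr fun n => ?_)
    simp only [u]
    rw [Function.iterate_succ_apply' R, Function.iterate_succ_apply g]
  · have := hd x 0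
    rw [dist_comm]
    simpa [u] using this

/-- a homeomorphism G at uniform distance δ from the split hyperbolic
homeomorphism Φ(a,b) = (S a, T b) admits a continuous semiconjugacy H onto Φ
(H ∘ G = Φ ∘ H) at distance at most λδ/(λ-1) from the identity. -/
theorem split_hyperbolic_semiconjugacy_exists
    {A B : Type*} [MetricSpace A] [CompleteSpace A] [MetricSpace B] [CompleteSpace B]
    (lam : ℝ) (hlam : 1 < lam) (S : Equiv.Perm A) (T : Equiv.Perm B)
    (hS : ∀ x y : A, dist (S x) (S y) = lam * dist x y)
    (hT : ∀ x y : B, dist (T x) (T y) = lam⁻¹ * dist x y)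
    (Φ : Equiv.Perm (A × B)) (hΦ : ∀ p : A × B, Φ p = (S p.1, T p.2))
    (G : (A × B) ≃ₜ (A × B)) (δ : ℝ)
    (hG : ∀ z : A × B, dist (G z) (Φ z) ≤ δ) :
    ∃ H : A × B → A × B, Continuous H ∧ (∀ z, H (G z) = Φ (H z)) ∧
      ∀ z, dist (H z) z ≤ lam * δ / (lam - 1) := by
  have hpos : 0 < lam := by linarith
  have hk0 : 0 ≤ lam⁻¹ := by positivity
  have hk1 : lam⁻¹ < 1 := inv_lt_one_of_one_lt₀ hlam
  have hG1 : ∀ z, dist (G z).1 (S z.1) ≤ δ := fun z => by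
    have := hG z
    rw [hΦ, Prod.dist_eq] at this
    exact (le_max_left _ _).trans this
  have hG2 : ∀ z, dist (G z).2 (T z.2) ≤ δ := fun z => by
    have := hG z
    rw [hΦ, Prod.dist_eq] at this
    exact (le_max_right _ _).trans this
  have hSi : ∀ x y, dist (S.symm x) (S.symm y) = lam⁻¹ * dist x y := fun x y => by
    have := hS (S.symm x) (S.symm y)
    simp only [Equiv.apply_symm_apply] at this
    rw [this, inv_mul_cancel_left₀ hpos.ne']
  obtain ⟨h₁, h₁c, h₁e, h₁d⟩ := exists_continuous_contraction_limit (ε := lam⁻¹ * δ) hk0 hk1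
    S.symm hSi G G.continuous Prod.fst continuous_fst (fun z => by
      have := hSi (S z.1) (G z).1
      rw [Equiv.symm_apply_apply] at this
      rw [this, dist_comm]
      exact mul_le_mul_of_nonneg_left (hG1 z) hk0)
  obtain ⟨h₂, h₂c, h₂e, h₂d⟩ := exists_continuous_contraction_limit (ε := δ) hk0 hk1
    T hT G.symm G.symm.continuous Prod.snd continuous_snd (fun z => by
      simpa using hG2 (G.symm z))
  have hl : 0 < lam - 1 := by linarith
  refine ⟨fun z => (h₁ z, h₂ z), h₁c.prodMk h₂c, fun z => ?_, fun z => ?_⟩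
  · rw [hΦ]
    refine Prod.ext ?_ ?_
    · simp [← h₁e z]
    · simp [← h₂e (G z)]
  · have hδ : 0 ≤ δ := dist_nonneg.trans (hG z)
    rw [Prod.dist_eq]
    refine max_le ((h₁d z).trans ?_) ((h₂d z).trans (le_of_eq ?_))
    · have e : lam⁻¹ * δ / (1 - lam⁻¹) = δ / (lam - 1) := by
        field_simp
      rw [e]
      gcongr
      nlinarith
    · field_simp
end

section
/- Let λ > 1, let A and B be complete metric spaces, let S : A → A be a λ-expansion and T : B → B a λ⁻¹-contraction, and let Φ(a, b) = (S a, T b) on A × B with the sup metric. Let G : A × B → A × B be a bijection. If H, H' : A × B → A × B are (not necessarily continuous) maps satisfying H ∘ G = Φ ∘ H, H' ∘ G = Φ ∘ H', sup_z dist(H z, z) < ∞ and sup_z dist(H' z, z) < ∞, then H = H'. -/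
/-!
Both `H` and `H'` are at bounded distance from the identity, so the distances between their
coordinates are bounded functions on `A × B`. The distance between the `A`-coordinates is
multiplied by `lam > 1` under `G`, and the distance between the `B`-coordinates is multiplied by
`lam` under `G⁻¹`. A bounded nonnegative function scaled by `lam` along a map vanishes
(`eq_zero_of_bounded_of_scaling`), so both coordinates agree.
-/

/-- Iterating the scaling relation gives `lam ^ n * f z ≤ K` for all `n`, which forces `f z = 0`. -/
theorem eq_zero_of_bounded_of_scaling {X : Type*} {lam K : ℝ} (hlam : 1 < lam)
    (f : X → ℝ) (g : X → X) (hf : ∀ z, 0 ≤ f z) (hK : ∀ z, f z ≤ K)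
    (hg : ∀ z, f (g z) = lam * f z) (z : X) : f z = 0 := by
  have hiter : ∀ n : ℕ, f (g^[n] z) = lam ^ n * f z := by
    intro n
    induction n with
    | zero => simp
    | succ n ih => rw [Function.iterate_succ_apply', hg, ih, pow_succ]; ring
  by_contra hne
  have hpos : 0 < f z := lt_of_le_of_ne (hf z) (Ne.symm hne)
  obtain ⟨n, hn⟩ := pow_unbounded_of_one_lt (K / f z) hlam
  have h1 := (div_lt_iff₀ hpos).1 hn
  have h2 := hK (g^[n] z)
  rw [hiter] at h2
  linarith

/-- uniqueness of the semiconjugacy at bounded distance from the identity: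
if H and H' both semiconjugate a bijection G to the split hyperbolic homeomorphism Φ
and both stay at bounded distance from the identity, then H = H'. -/
theorem split_hyperbolic_semiconjugacy_unique
    {A B : Type*} [MetricSpace A] [CompleteSpace A] [MetricSpace B] [CompleteSpace B]
    (lam : ℝ) (hlam : 1 < lam) (S : Equiv.Perm A) (T : Equiv.Perm B)
    (hS : ∀ x y : A, dist (S x) (S y) = lam * dist x y)
    (hT : ∀ x y : B, dist (T x) (T y) = lam⁻¹ * dist x y)
    (Φ : Equiv.Perm (A × B)) (hΦ : ∀ p : A × B, Φ p = (S p.1, T p.2))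
    (G : Equiv.Perm (A × B)) (H H' : A × B → A × B)
    (hH : ∀ z, H (G z) = Φ (H z)) (hH' : ∀ z, H' (G z) = Φ (H' z))
    (hHb : ∃ C : ℝ, ∀ z, dist (H z) z ≤ C)
    (hH'b : ∃ C : ℝ, ∀ z, dist (H' z) z ≤ C) :
    H = H' := by
  obtain ⟨C, hC⟩ := hHb
  obtain ⟨C', hC'⟩ := hH'b
  have hbound : ∀ z, dist (H z) (H' z) ≤ C + C' := fun z =>
    (dist_triangle_right (H z) (H' z) z).trans (add_le_add (hC z) (hC' z))
  have hfst : ∀ z, dist (H z).1 (H' z).1 = 0 :=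
    eq_zero_of_bounded_of_scaling hlam (fun z => dist (H z).1 (H' z).1) G
      (fun _ => dist_nonneg) (fun z => (le_max_left _ _).trans (hbound z))
      (fun z => by simp only [hH, hH', hΦ, hS])
  have hsnd : ∀ z, dist (H z).2 (H' z).2 = 0 := by
    refine eq_zero_of_bounded_of_scaling hlam (fun z => dist (H z).2 (H' z).2) G.symm
      (fun _ => dist_nonneg) (fun z => (le_max_right _ _).trans (hbound z)) (fun z => ?_)
    obtain ⟨w, rfl⟩ := G.surjective z
    simp only [Equiv.symm_apply_apply, hH, hH', hΦ, hT]
    rw [mul_inv_cancel_left₀ (by positivity)]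
  funext z
  exact Prod.ext (dist_eq_zero.1 (hfst z)) (dist_eq_zero.1 (hsnd z))
end

section
/- Let λ > 1, let A and B be complete metric spaces, let S : A → A be a λ-expansion and T : B → B a λ⁻¹-contraction, and let Φ(a, b) = (S a, T b) on A × B with the sup metric. Let G : A × B → A × B be a bijection and H : A × B → A × B a map with H ∘ G = Φ ∘ H and sup_z dist(H z, z) < ∞. Then for all z, z' ∈ A × B: H z = H z' if and only if sup_{n∈ℤ} dist(Gⁿ z, Gⁿ z') < ∞. -/
/-!
Iterating the semiconjugacy gives `H ∘ G ^ n = Φ ^ n ∘ H` for every integer `n`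
(`semiconj_zpow`). Let `C` bound the distance from `H` to the identity.

If `H z = H z'`, then `H` identifies `G ^ n z` and `G ^ n z'`, and each lies within `C` of the
common image, so the two orbits stay within `2 * C` of each other. Conversely, if the `G`-orbits
stay within `D`, the `Φ`-orbits of `H z` and `H z'` stay within `D + 2 * C`. But the `A`-distance
is multiplied by `lam > 1` at each forward step and the `B`-distance by `lam` at each backward
step, so boundedness forces both to vanish (`eq_zero_of_pow_mul_bounded`).
-/

theorem semiconj_zpow {X : Type*} (G Φ : Equiv.Perm X) (H : X → X)
    (hH : ∀ z, H (G z) = Φ (H z)) (n : ℤ) (z : X) : H ((G ^ n) z) = (Φ ^ n) (H z) := by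
  induction n with
  | zero => simp
  | succ n ih => rw [add_comm, zpow_one_add, zpow_one_add, Equiv.Perm.mul_apply,
      Equiv.Perm.mul_apply, hH, ih]
  | pred n ih =>
    apply Φ.injective
    rw [← hH, ← Equiv.Perm.mul_apply, ← Equiv.Perm.mul_apply, ← zpow_one_add, ← zpow_one_add]
    simpa using ih

theorem dist_pow_apply {X Y : Type*} [MetricSpace Y] (f : Equiv.Perm X) (π : X → Y) (c : ℝ)
    (h : ∀ p q, dist (π (f p)) (π (f q)) = c * dist (π p) (π q)) (n : ℕ) (p q : X) :
    dist (π ((f ^ n) p)) (π ((f ^ n) q)) = c ^ n * dist (π p) (π q) := by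
  induction n with
  | zero => simp
  | succ n ih =>
    rw [pow_succ', Equiv.Perm.mul_apply, Equiv.Perm.mul_apply, h, ih]
    ring

theorem eq_zero_of_pow_mul_bounded {c d K : ℝ} (hc : 1 < c) (hd : 0 ≤ d)
    (h : ∀ n : ℕ, c ^ n * d ≤ K) : d = 0 := by
  by_contra hne
  have hpos : 0 < d := lt_of_le_of_ne hd (Ne.symm hne)
  obtain ⟨n, hn⟩ := pow_unbounded_of_one_lt (K / d) hc
  rw [div_lt_iff₀ hpos] at hn
  exact absurd (h n) (not_le.mpr hn)

/-- the fibers of the shadowing semiconjugacy H (H ∘ G = Φ ∘ H, H at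
bounded distance from the identity) are exactly the global shadowing classes of the
bijection G: H z = H z' iff the G-orbits of z and z' stay at uniformly bounded
distance for all n ∈ ℤ. -/
theorem semiconjugacy_fibers_are_global_shadowing_classes
    {A B : Type*} [MetricSpace A] [CompleteSpace A] [MetricSpace B] [CompleteSpace B]
    (lam : ℝ) (hlam : 1 < lam) (S : Equiv.Perm A) (T : Equiv.Perm B)
    (hS : ∀ x y : A, dist (S x) (S y) = lam * dist x y)
    (hT : ∀ x y : B, dist (T x) (T y) = lam⁻¹ * dist x y)
    (Φ : Equiv.Perm (A × B)) (hΦ : ∀ p : A × B, Φ p = (S p.1, T p.2))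
    (G : Equiv.Perm (A × B)) (H : A × B → A × B)
    (hH : ∀ z, H (G z) = Φ (H z))
    (hHb : ∃ C : ℝ, ∀ z, dist (H z) z ≤ C) :
    ∀ z z' : A × B,
      H z = H z' ↔ ∃ C : ℝ, ∀ n : ℤ, dist ((G ^ n) z) ((G ^ n) z') ≤ C := by
  obtain ⟨C, hC⟩ := hHb
  intro z z'
  have hconj := semiconj_zpow G Φ H hH
  constructor
  · intro h
    refine ⟨C + C, fun n => ?_⟩
    have heq : H ((G ^ n) z) = H ((G ^ n) z') := by rw [hconj, hconj, h]
    have h1 := hC ((G ^ n) z)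
    have h2 := hC ((G ^ n) z')
    rw [← heq] at h2
    have h3 := dist_triangle_left ((G ^ n) z) ((G ^ n) z') (H ((G ^ n) z))
    linarith
  · rintro ⟨D, hD⟩
    have hbd : ∀ n : ℤ, dist ((Φ ^ n) (H z)) ((Φ ^ n) (H z')) ≤ C + D + C := by
      intro n
      rw [← hconj, ← hconj]
      have h1 := hC ((G ^ n) z)
      have h2 := hC ((G ^ n) z')
      rw [dist_comm] at h2
      have h3 := dist_triangle4 (H ((G ^ n) z)) ((G ^ n) z) ((G ^ n) z') (H ((G ^ n) z'))
      linarith [hD n]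
    have hlam0 : lam ≠ 0 := by positivity
    have hA : ∀ p q : A × B, dist (Φ p).1 (Φ q).1 = lam * dist p.1 q.1 := by
      intro p q
      rw [hΦ, hΦ, hS]
    have hB : ∀ p q : A × B, dist (Φ⁻¹ p).2 (Φ⁻¹ q).2 = lam * dist p.2 q.2 := by
      intro p q
      have h := hT (Φ⁻¹ p).2 (Φ⁻¹ q).2
      have hp : T (Φ⁻¹ p).2 = p.2 := by
        simpa using (congrArg Prod.snd (hΦ (Φ⁻¹ p))).symm
      have hq : T (Φ⁻¹ q).2 = q.2 := by
        simpa using (congrArg Prod.snd (hΦ (Φ⁻¹ q))).symm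
      rw [hp, hq] at h
      rw [h, mul_inv_cancel_left₀ hlam0]
    apply Prod.ext
    · refine dist_eq_zero.mp (eq_zero_of_pow_mul_bounded hlam dist_nonneg
        (K := C + D + C) fun n => ?_)
      rw [← dist_pow_apply Φ Prod.fst lam hA n]
      refine le_trans ?_ (hbd n)
      rw [zpow_natCast, Prod.dist_eq]
      exact le_max_left _ _
    · refine dist_eq_zero.mp (eq_zero_of_pow_mul_bounded hlam dist_nonneg
        (K := C + D + C) fun n => ?_)
      rw [← dist_pow_apply Φ⁻¹ Prod.snd lam hB n]
      refine le_trans ?_ (hbd (-n))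
      rw [zpow_neg, zpow_natCast, ← inv_pow, Prod.dist_eq]
      exact le_max_right _ _
end

section
/- Let λ > 1, let A and B be complete metric spaces, let S : A → A be a λ-expansion and T : B → B a λ⁻¹-contraction, and let Φ(a, b) = (S a, T b) on A × B with the sup metric. Let G, G' : A × B → A × B be homeomorphisms with sup_z dist(G z, Φ z) < ∞ and sup_z dist(G' z, Φ z) < ∞, and let H, H' be the unique maps with H ∘ G = Φ ∘ H, H' ∘ G' = Φ ∘ H', sup_z dist(H z, z) < ∞ and sup_z dist(H' z, z) < ∞. If h : A × B → A × B is a surjective map with sup_z dist(h z, z) < ∞ and h ∘ G = G' ∘ h, then H = H' ∘ h, and consequently range(H) = range(H'). -/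
/-!
Both `H` and `K = H' ∘ h` semiconjugate `G` to `Φ` and lie at bounded distance from the identity,
so they lie at bounded distance from each other. The distance between their `A`-coordinates is
multiplied by `lam` along forward `G`-orbits, and the distance between their `B`-coordinates is
multiplied by `lam` along backward `G`-orbits. A bounded function that is scaled by a factor
`lam > 1` along orbits vanishes (`eq_zero_of_bounded_of_scaled`), so `H = K`. The equality of the
ranges is then the surjectivity of `h`.
-/

/-- A nonnegative function bounded above that is multiplied by `lam > 1` under a self-map `e`
vanishes identically, since its values along an `e`-orbit grow geometrically. -/
theorem eq_zero_of_bounded_of_scaled {X : Type*} {lam C : ℝ} (hlam : 1 < lam) (e : X → X)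
    (f : X → ℝ) (hf : ∀ x, 0 ≤ f x) (hC : ∀ x, f x ≤ C) (he : ∀ x, f (e x) = lam * f x) (x : X) :
    f x = 0 := by
  by_contra hne
  have hpos : 0 < f x := lt_of_le_of_ne (hf x) (Ne.symm hne)
  have hiter : ∀ n : ℕ, f (e^[n] x) = lam ^ n * f x := by
    intro n
    induction n with
    | zero => simp
    | succ k ih => rw [Function.iterate_succ_apply', he, ih]; ring
  obtain ⟨n, hn⟩ := pow_unbounded_of_one_lt (C / f x) hlam
  rw [div_lt_iff₀ hpos, ← hiter n] at hn
  exact absurd (hC _) (not_le.mpr hn)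

/-- universal-cover form of Corollary 1.3: if h is a surjective
semiconjugacy from G to G' at bounded distance from the identity, and H, H' are the
shadowing semiconjugacies from G, G' to the split hyperbolic homeomorphism Φ, then
H = H' ∘ h; consequently range H = range H'. -/
theorem semiconjugate_maps_same_L
    {A B : Type*} [MetricSpace A] [CompleteSpace A] [MetricSpace B] [CompleteSpace B]
    (lam : ℝ) (hlam : 1 < lam) (S : Equiv.Perm A) (T : Equiv.Perm B)
    (hS : ∀ x y : A, dist (S x) (S y) = lam * dist x y)
    (hT : ∀ x y : B, dist (T x) (T y) = lam⁻¹ * dist x y)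
    (Φ : Equiv.Perm (A × B)) (hΦ : ∀ p : A × B, Φ p = (S p.1, T p.2))
    (G G' : (A × B) ≃ₜ (A × B))
    (hG : ∃ δ : ℝ, ∀ z : A × B, dist (G z) (Φ z) ≤ δ)
    (hG' : ∃ δ : ℝ, ∀ z : A × B, dist (G' z) (Φ z) ≤ δ)
    (H H' : A × B → A × B)
    (hH : ∀ z, H (G z) = Φ (H z)) (hH' : ∀ z, H' (G' z) = Φ (H' z))
    (hHb : ∃ C : ℝ, ∀ z, dist (H z) z ≤ C)
    (hH'b : ∃ C : ℝ, ∀ z, dist (H' z) z ≤ C)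
    (h : A × B → A × B) (hsurj : Function.Surjective h)
    (hb : ∃ C : ℝ, ∀ z, dist (h z) z ≤ C)
    (hsemi : ∀ z, h (G z) = G' (h z)) :
    H = H' ∘ h ∧ Set.range H = Set.range H' := by
  obtain ⟨C₁, hC₁⟩ := hHb
  obtain ⟨C₂, hC₂⟩ := hH'b
  obtain ⟨C₃, hC₃⟩ := hb
  have hbound : ∀ z, dist (H z) (H' (h z)) ≤ C₁ + (C₂ + C₃) := by
    intro z
    have h1 := dist_triangle_right (H z) (H' (h z)) z
    have h2 := dist_triangle (H' (h z)) (h z) z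
    linarith [hC₁ z, hC₂ (h z), hC₃ z]
  have hK : ∀ z, H' (h (G z)) = Φ (H' (h z)) := fun z => by rw [hsemi, hH']
  have hfst : ∀ z, dist (H z).1 (H' (h z)).1 = 0 :=
    eq_zero_of_bounded_of_scaled hlam G (fun z => dist (H z).1 (H' (h z)).1)
      (fun _ => dist_nonneg) (fun z => (le_max_left _ _).trans (hbound z))
      (fun z => by simp only [hH, hK, hΦ, hS])
  have hsnd : ∀ z, dist (H z).2 (H' (h z)).2 = 0 :=
    eq_zero_of_bounded_of_scaled hlam G.symm (fun z => dist (H z).2 (H' (h z)).2)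
      (fun _ => dist_nonneg) (fun z => (le_max_right _ _).trans (hbound z))
      (fun z => by
        -- Apply the contraction along `G` at the point `G.symm z`.
        have hz : dist (H z).2 (H' (h z)).2
            = lam⁻¹ * dist (H (G.symm z)).2 (H' (h (G.symm z))).2 := by
          conv_lhs => rw [← G.apply_symm_apply z]
          rw [hH, hK, hΦ, hΦ, hT]
        simp only [hz]
        rw [mul_inv_cancel_left₀ (by linarith)])
  have heq : H = H' ∘ h :=
    funext fun z => Prod.ext (dist_eq_zero.mp (hfst z)) (dist_eq_zero.mp (hsnd z))
  exact ⟨heq, by rw [heq, hsurj.range_comp]⟩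
end

section
/- Let λ > 1, let A and B be complete metric spaces, let S : A → A be a λ-expansion and T : B → B a λ⁻¹-contraction, and let Φ(a, b) = (S a, T b) on A × B with the sup metric. Let δ > 0, let G and G_k (k ∈ ℕ) be homeomorphisms of A × B with sup_z dist(G z, Φ z) ≤ δ and sup_z dist(G_k z, Φ z) ≤ δ for all k, and suppose G_k → G and G_k⁻¹ → G⁻¹ uniformly as k → ∞. Let H and H_k be the unique maps satisfying H ∘ G = Φ ∘ H, H_k ∘ G_k = Φ ∘ H_k, sup_z dist(H z, z) < ∞ and sup_z dist(H_k z, z) < ∞. Then H_k z → H z for every z ∈ A × B. -/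
/-!
Every semiconjugacy at finite distance from the identity is within
`δ / (1 - lam⁻¹)` of it, a bound independent of the homeomorphism
(`dist_semiconj_le`). Hence the orbits of `Hk k z` and `H z` under `Φ` stay, up to an
additive constant, as close as the orbits of `z` under `Gk k` and `G`, and over a fixed number `n`
of steps the latter converge to each other as `k → ∞`. In the expanding factor `A` the distance
between `Hk k z` and `H z` is multiplied by `lam ^ n` in `n` forward steps, so it is eventually
at most a constant times `lam⁻¹ ^ n`; in `B` the same holds for backward steps.
Both factors are instances of `tendsto_of_expanding_factor`.
-/

open Filter Topology

/-- The finite bound `C` improves to `lam⁻¹ * C + δ`: in the `B` factor by applying `T`, in the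
`A` factor by applying `S⁻¹`. Iterating brings it down to the fixed point of this affine map. -/
lemma dist_semiconj_le {A B : Type*} [MetricSpace A] [MetricSpace B]
    {lam : ℝ} (hlam : 1 < lam) {S : A → A} {T : B → B}
    (hS : ∀ x y : A, dist (S x) (S y) = lam * dist x y)
    (hT : ∀ x y : B, dist (T x) (T y) = lam⁻¹ * dist x y)
    {δ : ℝ} (hδ : 0 < δ) {G : A × B → A × B} (hGs : Function.Surjective G)
    (hG : ∀ z, dist (G z) (S z.1, T z.2) ≤ δ)
    {H : A × B → A × B} (hH : ∀ z, H (G z) = (S (H z).1, T (H z).2))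
    (hHb : ∃ C : ℝ, ∀ z, dist (H z) z ≤ C) (z : A × B) :
    dist (H z) z ≤ δ / (1 - lam⁻¹) := by
  obtain ⟨C, hC⟩ := hHb
  have h0 : 0 < lam⁻¹ := by positivity
  have h1 : lam⁻¹ < 1 := inv_lt_one_of_one_lt₀ hlam
  set K := δ / (1 - lam⁻¹) with hK
  have hKeq : lam⁻¹ * K + δ = K := by
    have h2 : 1 - lam⁻¹ ≠ 0 := by linarith
    have h3 : K * (1 - lam⁻¹) = δ := div_mul_cancel₀ _ h2
    linarith
  have hK0 : 0 < K := div_pos hδ (by linarith)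
  have step : ∀ D : ℝ, (∀ z, dist (H z) z ≤ D) → ∀ z, dist (H z) z ≤ lam⁻¹ * D + δ := by
    intro D hD z
    rw [Prod.dist_eq]
    refine max_le ?_ ?_
    · have e1 : lam * dist (H z).1 z.1 = dist (H (G z)).1 (S z.1) := by rw [hH, hS]
      have e2 := dist_triangle (H (G z)).1 (G z).1 (S z.1)
      have e3 : dist (H (G z)).1 (G z).1 ≤ D := (le_max_left _ _).trans (hD (G z))
      have e4 : dist (G z).1 (S z.1) ≤ δ := (le_max_left _ _).trans (hG z)
      have e5 : dist (H z).1 z.1 = lam⁻¹ * (lam * dist (H z).1 z.1) := by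
        field_simp
      have e6 : lam⁻¹ * (lam * dist (H z).1 z.1) ≤ lam⁻¹ * (D + δ) :=
        mul_le_mul_of_nonneg_left (by linarith) h0.le
      nlinarith
    · obtain ⟨w, rfl⟩ := hGs z
      have e1 : dist (H (G w)).2 (T w.2) = lam⁻¹ * dist (H w).2 w.2 := by rw [hH, hT]
      have e2 := dist_triangle_right (H (G w)).2 (G w).2 (T w.2)
      have e3 : dist (H w).2 w.2 ≤ D := (le_max_right _ _).trans (hD w)
      have e4 : dist (G w).2 (T w.2) ≤ δ := (le_max_right _ _).trans (hG w)
      have e6 := mul_le_mul_of_nonneg_left e3 h0.le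
      linarith
  have iter : ∀ n : ℕ, ∀ z, dist (H z) z ≤ lam⁻¹ ^ n * C + K := by
    intro n
    induction n with
    | zero => intro z; have := hC z; simp only [pow_zero, one_mul]; linarith
    | succ n ih =>
      intro z
      refine (step _ ih z).trans_eq ?_
      rw [pow_succ]
      linear_combination hKeq
  have lim : Tendsto (fun n : ℕ => lam⁻¹ ^ n * C + K) atTop (𝓝 (0 * C + K)) :=
    ((tendsto_pow_atTop_nhds_zero_of_lt_one h0.le h1).mul_const C).add_const K
  rw [zero_mul, zero_add] at lim
  exact ge_of_tendsto' lim fun n => iter n z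

lemma tendsto_iterate_apply {X : Type*} [MetricSpace X] {F : X → X} {Fk : ℕ → X → X}
    (hF : Continuous F) (hconv : TendstoUniformly Fk F atTop) (z : X) (n : ℕ) :
    Tendsto (fun k => (Fk k)^[n] z) atTop (𝓝 (F^[n] z)) := by
  induction n with
  | zero => simp
  | succ n ih =>
    simp only [Function.iterate_succ_apply']
    exact hconv.tendsto_comp hF.continuousAt ih

/-- If `h` and `hk k` semiconjugate `F` and `Fk k` to the same `lam`-expansion `R`, and all lie
within `K` of one 1-Lipschitz map `p`, then `hk k → h` pointwise when `Fk → F` uniformly. -/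
lemma tendsto_of_expanding_factor {X Y : Type*} [MetricSpace X] [MetricSpace Y]
    {lam : ℝ} (hlam : 1 < lam) {R : Y → Y}
    (hR : ∀ x y, dist (R x) (R y) = lam * dist x y)
    {F : X → X} {Fk : ℕ → X → X} (hF : Continuous F)
    (hconv : TendstoUniformly Fk F atTop)
    {p : X → Y} (hp : ∀ x y, dist (p x) (p y) ≤ dist x y)
    {h : X → Y} {hk : ℕ → X → Y}
    (hh : ∀ z, h (F z) = R (h z)) (hhk : ∀ k z, hk k (Fk k z) = R (hk k z))
    {K : ℝ} (hb : ∀ z, dist (h z) (p z) ≤ K) (hkb : ∀ k z, dist (hk k z) (p z) ≤ K) (z : X) :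
    Tendsto (fun k => hk k z) atTop (𝓝 (h z)) := by
  have expand : ∀ k n, lam ^ n * dist (hk k z) (h z)
      = dist (hk k ((Fk k)^[n] z)) (h (F^[n] z)) := by
    intro k n
    induction n with
    | zero => simp
    | succ n ih =>
      rw [Function.iterate_succ_apply', Function.iterate_succ_apply', hh, hhk, hR, ← ih]
      ring
  rw [Metric.tendsto_atTop]
  intro ε hε
  -- `n` is large enough that `lam ^ n * ε` exceeds the bound `K + 1 + K` reached once the
  -- `n`-th iterates of `z` are less than `1` apart.
  obtain ⟨n, hn⟩ := pow_unbounded_of_one_lt ((2 * K + 1) / ε) hlam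
  obtain ⟨N, hN⟩ := Metric.tendsto_atTop.1 (tendsto_iterate_apply hF hconv z n) 1 one_pos
  refine ⟨N, fun k hkN => ?_⟩
  have e1 := hN k hkN
  have e2 := dist_triangle4_right (hk k ((Fk k)^[n] z)) (h (F^[n] z))
    (p ((Fk k)^[n] z)) (p (F^[n] z))
  have e3 := hb (F^[n] z)
  have e4 := hkb k ((Fk k)^[n] z)
  have e5 := hp ((Fk k)^[n] z) (F^[n] z)
  have e6 := expand k n
  rw [div_lt_iff₀ hε] at hn
  have hpos : 0 < lam ^ n := by positivity
  refine lt_of_mul_lt_mul_left ?_ hpos.le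
  linarith

/-- continuity mechanism of Theorem 2: if homeomorphisms G_k converge
uniformly to G (and their inverses to G⁻¹), all within distance δ of the split
hyperbolic homeomorphism Φ, then the corresponding shadowing semiconjugacies H_k
converge pointwise to H. -/
theorem semiconjugacy_continuous_dependence
    {A B : Type*} [MetricSpace A] [CompleteSpace A] [MetricSpace B] [CompleteSpace B]
    (lam : ℝ) (hlam : 1 < lam) (S : Equiv.Perm A) (T : Equiv.Perm B)
    (hS : ∀ x y : A, dist (S x) (S y) = lam * dist x y)
    (hT : ∀ x y : B, dist (T x) (T y) = lam⁻¹ * dist x y)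
    (Φ : Equiv.Perm (A × B)) (hΦ : ∀ p : A × B, Φ p = (S p.1, T p.2))
    (δ : ℝ) (hδ : 0 < δ)
    (G : (A × B) ≃ₜ (A × B)) (Gk : ℕ → (A × B) ≃ₜ (A × B))
    (hG : ∀ z : A × B, dist (G z) (Φ z) ≤ δ)
    (hGk : ∀ k, ∀ z : A × B, dist (Gk k z) (Φ z) ≤ δ)
    (hconv : TendstoUniformly (fun k => ⇑(Gk k)) (⇑G) atTop)
    (hconvinv : TendstoUniformly (fun k => ⇑(Gk k).symm) (⇑G.symm) atTop)
    (H : A × B → A × B) (Hk : ℕ → A × B → A × B)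
    (hH : ∀ z, H (G z) = Φ (H z))
    (hHk : ∀ k, ∀ z, Hk k (Gk k z) = Φ (Hk k z))
    (hHb : ∃ C : ℝ, ∀ z, dist (H z) z ≤ C)
    (hHkb : ∀ k, ∃ C : ℝ, ∀ z, dist (Hk k z) z ≤ C) :
    ∀ z : A × B, Tendsto (fun k => Hk k z) atTop (𝓝 (H z)) := by
  intro z
  have hHK : ∀ z, dist (H z) z ≤ δ / (1 - lam⁻¹) :=
    dist_semiconj_le hlam hS hT hδ G.surjective (fun z => hΦ z ▸ hG z)
      (fun z => (hH z).trans (hΦ _)) hHb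
  have hHkK : ∀ k z, dist (Hk k z) z ≤ δ / (1 - lam⁻¹) := fun k =>
    dist_semiconj_le hlam hS hT hδ (Gk k).surjective (fun z => hΦ z ▸ hGk k z)
      (fun z => (hHk k z).trans (hΦ _)) (hHkb k)
  have hTsymm : ∀ x y, dist (T.symm x) (T.symm y) = lam * dist x y := by
    intro x y
    have := hT (T.symm x) (T.symm y)
    rw [T.apply_symm_apply, T.apply_symm_apply] at this
    rw [this]
    field_simp
  have hfst : Tendsto (fun k => (Hk k z).1) atTop (𝓝 (H z).1) :=
    tendsto_of_expanding_factor (p := Prod.fst) (h := fun z => (H z).1)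
      (hk := fun k z => (Hk k z).1) hlam hS G.continuous hconv
      (fun _ _ => le_max_left _ _)
      (fun z => by simp only [hH, hΦ]) (fun k z => by simp only [hHk, hΦ])
      (fun z => (le_max_left _ _).trans (hHK z))
      (fun k z => (le_max_left _ _).trans (hHkK k z)) z
  have hsnd : Tendsto (fun k => (Hk k z).2) atTop (𝓝 (H z).2) := by
    refine tendsto_of_expanding_factor (p := Prod.snd) (h := fun z => (H z).2)
      (hk := fun k z => (Hk k z).2) hlam hTsymm G.symm.continuous hconvinv
      (fun _ _ => le_max_right _ _) (fun z => ?_) (fun k z => ?_)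
      (fun z => (le_max_right _ _).trans (hHK z))
      (fun k z => (le_max_right _ _).trans (hHkK k z)) z
    · rw [Equiv.eq_symm_apply]
      have := hH (G.symm z)
      rw [G.apply_symm_apply, hΦ] at this
      rw [this]
    · rw [Equiv.eq_symm_apply]
      have := hHk k ((Gk k).symm z)
      rw [(Gk k).apply_symm_apply, hΦ] at this
      rw [this]
  exact hfst.prodMk_nhds hsnd
end
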